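/- For all integers d ≥ 0 and n ≥ 0 we have C_2^d(x) = C_1^{d+1}(x) as formal power series; equivalently, C^d_{2,n} = C^{d+1}_{1,n} for all n. -/

import Mathlib

/-- Full binary trees (every internal node has exactly two children). -/
inductive BTree : Type
  | leaf : BTree
  | node : BTree → BTree → BTree
deriving DecidableEq

namespace BTree

/-- Number of leaves of a full binary tree. -/
def numLeaves : BTree → ℕ
  | leaf => 1
  | node l r => l.numLeaves + r.numLeaves

/-- The list of pairs (left depth, right depth) of the leaves, in preorder. -/
def leafDepths : BTree → List (ℕ × ℕ)
  | leaf => [(0, 0)]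
  | node l r =>
      (l.leafDepths.map fun p => (p.1 + 1, p.2)) ++ (r.leafDepths.map fun p => (p.1, p.2 + 1))

/-- The left depth sequence `ld(t)` of the leaves of `t`, in preorder. -/
def ld (t : BTree) : List ℕ := t.leafDepths.map Prod.fst

/-- The right depth sequence `rd(t)` of the leaves of `t`, in preorder. -/
def rd (t : BTree) : List ℕ := t.leafDepths.map Prod.snd

end BTree

/-- `b ~^d c` : the sequences have equal length and agree at every position where
either entry is `< d`. -/
def DepthEq (d : ℕ) : List ℕ → List ℕ → Prop :=
  List.Forall₂ (fun a b => min a b < d → a = b)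

/-- `b ~_k c` : entrywise congruence mod `k` (and equal length). -/
def ModListEq (k : ℕ) : List ℕ → List ℕ → Prop :=
  List.Forall₂ (fun a b => a % k = b % k)

/-- The relation `t ~ t'` iff `ld(t) ~^d ld(t')` and `rd(t) ~^e rd(t')`. -/
def DeRel (d e : ℕ) (t t' : BTree) : Prop :=
  DepthEq d t.ld t'.ld ∧ DepthEq e t.rd t'.rd

/-- The relation `t ~ t'` iff `ld(t) ~_k^d ld(t')` (i.e. `ld(t) ~_k ld(t')` and
`ld(t) ~^d ld(t')`). -/
def DkRel (d k : ℕ) (t t' : BTree) : Prop :=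
  ModListEq k t.ld t'.ld ∧ DepthEq d t.ld t'.ld

/-- `T_n`: full binary trees with `n+1` leaves. -/
def Tn (n : ℕ) : Type := {t : BTree // t.numLeaves = n + 1}

/-- `C^{d,e}_n`: the number of equivalence classes of the relation `DeRel d e` on `T_n`. -/
noncomputable def Cde (d e n : ℕ) : ℕ :=
  Nat.card (Quot (fun t t' : Tn n => DeRel d e t.1 t'.1))

/-- `C^d_{k,n}`: the number of equivalence classes of `ld(t) ~_k^d ld(t')` on `T_n`. -/
noncomputable def Cdk (d k n : ℕ) : ℕ :=
  Nat.card (Quot (fun t t' : Tn n => DkRel d k t.1 t'.1))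

/-- Directions to a left or right child. -/
inductive Dir : Type
  | L : Dir
  | R : Dir
deriving DecidableEq

/-- The maximal subtree rooted at the node at position `p` (if such a node exists). -/
def subtreeAt : BTree → List Dir → Option BTree
  | t, [] => some t
  | BTree.leaf, _ :: _ => none
  | BTree.node l _, Dir.L :: p => subtreeAt l p
  | BTree.node _ r, Dir.R :: p => subtreeAt r p

/-- Replace the maximal subtree rooted at position `p` by `s` (if the position exists). -/
def replaceAt : BTree → List Dir → BTree → Option BTree
  | _, [], s => some s
  | BTree.leaf, _ :: _, _ => none
  | BTree.node l r, Dir.L :: p, s => (replaceAt l p s).map fun l' => BTree.node l' r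
  | BTree.node l r, Dir.R :: p, s => (replaceAt r p s).map fun r' => BTree.node l r'

/-- `leftAssoc t₀ [t₁,…,t_m] = t₀ ∧ t₁ ∧ ⋯ ∧ t_m` with `∧` performed left to right. -/
def leftAssoc : BTree → List BTree → BTree := List.foldl BTree.node

/-- `t'` is obtained from `t` by a right `k`-rotation at the node at position `p`:
the maximal subtree `t₀ ∧ t₁ ∧ ⋯ ∧ t_{k+1}` rooted there (with `∧` performed left to
right) is replaced by `t₀ ∧ (t₁ ∧ ⋯ ∧ t_{k+1})`.  The left depth of that node is
`p.count Dir.L`. -/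
def IsRightKRot (k : ℕ) (p : List Dir) (t t' : BTree) : Prop :=
  ∃ (t₀ t₁ : BTree) (rest : List BTree), rest.length = k ∧
    subtreeAt t p = some (leftAssoc t₀ (t₁ :: rest)) ∧
    replaceAt t p (BTree.node t₀ (leftAssoc t₁ rest)) = some t'

/-- `IsTopOf s u`: `s` is a subtree of `u` rooted at the root of `u`. -/
def IsTopOf : BTree → BTree → Prop
  | BTree.leaf, _ => True
  | BTree.node l r, BTree.node l' r' => IsTopOf l l' ∧ IsTopOf r r'
  | BTree.node _ _, BTree.leaf => False

/-- `t` contains `s` at left depth `δ`: `t` has a subtree equal to `s` rooted at a node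
of left depth `δ`. -/
def ContainsAt (t s : BTree) (δ : ℕ) : Prop :=
  ∃ (p : List Dir) (u : BTree), subtreeAt t p = some u ∧ p.count Dir.L = δ ∧ IsTopOf s u

/-- `t` avoids `s` at left depth `δ`. -/
def AvoidsAt (t s : BTree) (δ : ℕ) : Prop := ¬ ContainsAt t s δ

/-- `comb_k`: the left-to-right `∧`-product of `k+1` single leaves. -/
def comb (k : ℕ) : BTree := leftAssoc BTree.leaf (List.replicate k BTree.leaf)

/-- `comb_k^1 := t₀ ∧ comb_k` with `t₀` a single leaf. -/
def comb1 (k : ℕ) : BTree := BTree.node BTree.leaf (comb k)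

/-- One left `k`-rotation step, at a node of left depth at least `d-1`, from `t` to `t'`. -/
def LeftRotStep (d k : ℕ) (t t' : BTree) : Prop :=
  ∃ p : List Dir, d - 1 ≤ p.count Dir.L ∧ IsRightKRot k p t' t

/-- The `(d;k)`-order: `s ≤ t` iff `s` is obtained from `t` by finitely many left
`k`-rotations at nodes of left depth at least `d-1`. -/
def dkLE (d k : ℕ) (s t : BTree) : Prop := Relation.ReflTransGen (LeftRotStep d k) t s

/-- `t` is `(d;k)`-minimal. -/
def dkMinimal (d k : ℕ) (t : BTree) : Prop := ∀ s, dkLE d k s t → s = t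

/-- `t` is `(d;k)`-maximal. -/
def dkMaximal (d k : ℕ) (t : BTree) : Prop := ∀ s, dkLE d k t s → s = t

/-- `M^d_{j,n}`: the number of binary trees in `T_n` avoiding `comb_{j+1}` at every left
depth at least `d-1`. -/
noncomputable def Mnum (j d n : ℕ) : ℕ :=
  Nat.card {t : BTree // t.numLeaves = n + 1 ∧ ∀ δ, d - 1 ≤ δ → AvoidsAt t (comb (j + 1)) δ}

/-- `C^d_{k,n}` with the convention `C^0_{k,n} := M^1_{k-1,n}`. -/
noncomputable def Cknum (k : ℕ) : ℕ → ℕ → ℕ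
  | 0, n => Mnum (k - 1) 1 n
  | d + 1, n => Cdk (d + 1) k n

/-- The generating function `C_k^d(x) = Σ_{n≥0} C^d_{k,n} x^{n+1}`. -/
noncomputable def CkdX (k d : ℕ) : PowerSeries ℚ :=
  PowerSeries.mk fun m => match m with
    | 0 => 0
    | n + 1 => (Cknum k d n : ℚ)

/-- The generating function `M_j^d(x) = Σ_{n≥0} M^d_{j,n} x^{n+1}`. -/
noncomputable def MkdX (j d : ℕ) : PowerSeries ℚ :=
  PowerSeries.mk fun m => match m with
    | 0 => 0
    | n + 1 => (Mnum j d n : ℚ)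

/-- Sequences that are left depth sequences. -/
inductive VSeq : List ℕ → Prop
  | zero : VSeq [0]
  | cons (a b : ℕ) (l : List ℕ) : 1 ≤ a → a ≤ b + 1 → VSeq (b :: l) → VSeq (a :: b :: l)

theorem ld_leaf : BTree.leaf.ld = [0] := rfl

theorem ld_node (l r : BTree) : (BTree.node l r).ld = l.ld.map (· + 1) ++ r.ld := by
  simp [BTree.ld, BTree.leafDepths, Function.comp_def]

theorem length_ld (t : BTree) : t.ld.length = t.numLeaves := by
  induction t with
  | leaf => rfl
  | node l r hl hr => simp [ld_node, BTree.numLeaves, hl, hr]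

theorem VSeq.append {l₁ l₂ : List ℕ} (h₁ : VSeq l₁) (h₂ : VSeq l₂) :
    VSeq (l₁.map (· + 1) ++ l₂) := by
  induction h₁ with
  | zero =>
    cases h₂ with
    | zero => exact VSeq.cons _ _ _ (by simp) (by simp) VSeq.zero
    | cons a b l ha hb h =>
      exact VSeq.cons _ _ _ (by simp) (by simp) (VSeq.cons _ _ _ ha hb h)
  | cons a b l ha hb h ih =>
    exact VSeq.cons _ _ _ (by dsimp only; omega) (by dsimp only; omega) ih

theorem vseq_ld (t : BTree) : VSeq t.ld := by
  induction t with
  | leaf => exact VSeq.zero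
  | node l r hl hr => rw [ld_node]; exact hl.append hr

theorem exists_cons (t : BTree) : ∀ (a b : ℕ) (l : List ℕ), t.ld = b :: l → 1 ≤ a → a ≤ b + 1 →
    ∃ t' : BTree, t'.ld = a :: b :: l := by
  induction t with
  | leaf =>
    intro a b l h ha hb
    rw [ld_leaf] at h
    obtain ⟨rfl, rfl⟩ := List.cons.inj h
    obtain rfl : a = 1 := by omega
    exact ⟨BTree.node BTree.leaf BTree.leaf, rfl⟩
  | node u r hu hr =>
    intro a b l h ha hb
    by_cases h1 : a = 1
    · subst h1
      exact ⟨BTree.node BTree.leaf (BTree.node u r), by rw [ld_node, h]; rfl⟩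
    · cases hul : u.ld with
      | nil => have := vseq_ld u; rw [hul] at this; cases this
      | cons c m =>
        rw [ld_node, hul] at h
        simp only [List.map_cons, List.cons_append, List.cons.injEq] at h
        obtain ⟨rfl, rfl⟩ := h
        obtain ⟨t', ht'⟩ := hu (a - 1) c m hul (by omega) (by omega)
        refine ⟨BTree.node t' r, ?_⟩
        rw [ld_node, ht']
        simp
        omega

theorem VSeq.exists_tree {l : List ℕ} (h : VSeq l) : ∃ t : BTree, t.ld = l := by
  induction h with
  | zero => exact ⟨BTree.leaf, rfl⟩
  | cons a b l ha hb h ih =>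
    obtain ⟨t, ht⟩ := ih
    exact exists_cons t a b l ht ha hb

theorem VSeq.map {f : ℕ → ℕ} (h0 : f 0 = 0) (h1 : ∀ a, 1 ≤ a → 1 ≤ f a)
    (h2 : ∀ a b, a ≤ b + 1 → f a ≤ f b + 1) {l : List ℕ} (h : VSeq l) : VSeq (l.map f) := by
  induction h with
  | zero => simpa [h0] using VSeq.zero
  | cons a b l ha hb h ih => exact VSeq.cons _ _ _ (h1 a ha) (h2 a b hb) ih

theorem rel_iff_map {d k : ℕ} {f : ℕ → ℕ}
    (hf : ∀ a b, (a % k = b % k ∧ (min a b < d → a = b)) ↔ f a = f b) (l : List ℕ) :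
    ∀ l', (ModListEq k l l' ∧ DepthEq d l l') ↔ l.map f = l'.map f := by
  unfold ModListEq DepthEq
  induction l with
  | nil => intro l'; cases l' <;> simp
  | cons a l ih =>
    intro l'
    cases l' with
    | nil => simp
    | cons b l' =>
      rw [List.forall₂_cons, List.forall₂_cons, List.map_cons, List.map_cons, List.cons.injEq,
        ← hf, ← ih]
      tauto

theorem Cdk_eq {d k n : ℕ} {f : ℕ → ℕ}
    (hf : ∀ a b, (a % k = b % k ∧ (min a b < d → a = b)) ↔ f a = f b) :
    Cdk d k n = Nat.card (Set.range fun t : Tn n => t.1.ld.map f) := by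
  unfold Cdk
  refine Nat.card_congr (Equiv.ofBijective
    (Quot.lift (fun t => ⟨t.1.ld.map f, t, rfl⟩) ?_) ⟨?_, ?_⟩)
  · intro t t' h
    exact Subtype.ext ((rel_iff_map hf _ _).1 h)
  · rintro ⟨t⟩ ⟨t'⟩ h
    exact Quot.sound ((rel_iff_map hf _ _).2 (congrArg Subtype.val h))
  · rintro ⟨_, t, rfl⟩
    exact ⟨Quot.mk _ t, rfl⟩

theorem range_subset {n : ℕ} {f g : ℕ → ℕ} (h0 : f 0 = 0) (h1 : ∀ a, 1 ≤ a → 1 ≤ f a)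
    (h2 : ∀ a b, a ≤ b + 1 → f a ≤ f b + 1) (hg : ∀ a, g (f a) = f a) :
    (Set.range fun t : Tn n => t.1.ld.map f) ⊆ Set.range fun t : Tn n => t.1.ld.map g := by
  rintro _ ⟨t, rfl⟩
  obtain ⟨t', ht'⟩ := ((vseq_ld t.1).map h0 h1 h2).exists_tree
  refine ⟨⟨t', ?_⟩, ?_⟩
  · rw [← length_ld, ht', List.length_map, length_ld, t.2]
  · simp [ht', Function.comp_def, hg]

theorem main_pos (d n : ℕ) : Cdk (d + 1) 2 n = Cdk (d + 2) 1 n := by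
  rw [Cdk_eq (f := fun a => if a < d + 1 then a else if a % 2 = (d + 1) % 2 then d + 1 else d + 2),
    Cdk_eq (f := fun a => min a (d + 2))]
  · refine congrArg (fun s : Set (List ℕ) => Nat.card s)
      (Set.Subset.antisymm (range_subset ?_ ?_ ?_ ?_) (range_subset ?_ ?_ ?_ ?_))
    · simp
    · intro a h; split_ifs <;> omega
    · intro a b h; split_ifs <;> omega
    · intro a; split_ifs <;> omega
    · simp
    · intro a h; omega
    · intro a b h; omega
    · intro a; split_ifs <;> omega
  · intro a b; omega
  · intro a b; split_ifs <;> omega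

theorem VSeq.depthEq_one {l : List ℕ} (h : VSeq l) :
    ∀ l', VSeq l' → l.length = l'.length → DepthEq 1 l l' := by
  unfold DepthEq
  induction h with
  | zero =>
    intro l' h' hl
    cases h' with
    | zero => simp
    | cons a b l => simp at hl
  | cons a b l ha hb h ih =>
    intro l' h' hl
    cases h' with
    | zero => simp at hl
    | cons a' b' l' ha' hb' h' =>
      exact List.Forall₂.cons (by omega) (ih _ h' (by simpa using hl))

/-- The right comb. -/
def rcomb : ℕ → BTree
  | 0 => BTree.leaf
  | n + 1 => BTree.node BTree.leaf (rcomb n)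

theorem numLeaves_rcomb (n : ℕ) : (rcomb n).numLeaves = n + 1 := by
  induction n with
  | zero => rfl
  | succ n ih => simp [rcomb, BTree.numLeaves, ih]; omega

theorem one_le_numLeaves (t : BTree) : 1 ≤ t.numLeaves := by
  induction t with
  | leaf => exact le_rfl
  | node l r hl hr => simp only [BTree.numLeaves]; omega

theorem rcomb_avoids (n : ℕ) : ∀ (p : List Dir) (u : BTree), subtreeAt (rcomb n) p = some u →
    ¬ IsTopOf (comb 2) u := by
  induction n with
  | zero =>
    intro p u h
    cases p with
    | nil => simp only [rcomb, subtreeAt, Option.some.injEq] at h; subst h; exact id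
    | cons x p => simp [rcomb, subtreeAt] at h
  | succ n ih =>
    intro p u h
    match p with
    | [] =>
      simp only [rcomb, subtreeAt, Option.some.injEq] at h; subst h
      exact fun h => h.1
    | Dir.R :: p => exact ih p u h
    | Dir.L :: [] =>
      simp only [rcomb, subtreeAt, Option.some.injEq] at h; subst h; exact id
    | Dir.L :: x :: p => simp [rcomb, subtreeAt] at h

theorem eq_rcomb (t : BTree) : ∀ n, t.numLeaves = n + 1 →
    (∀ (p : List Dir) (u : BTree), subtreeAt t p = some u → ¬ IsTopOf (comb 2) u) →
    t = rcomb n := by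
  induction t with
  | leaf =>
    intro n h _
    have : n = 0 := by simpa [BTree.numLeaves] using h.symm
    subst this; rfl
  | node l r hl hr =>
    intro n h hav
    cases l with
    | node a b =>
      exact absurd ⟨⟨trivial, trivial⟩, trivial⟩
        (hav [] (BTree.node (BTree.node a b) r) (by simp only [subtreeAt]))
    | leaf =>
      have h1 := one_le_numLeaves r
      simp only [BTree.numLeaves] at h
      obtain ⟨m, rfl⟩ : ∃ m, n = m + 1 := ⟨n - 1, by omega⟩
      rw [rcomb, ← hr m (by omega) (fun p u hp => hav (Dir.R :: p) u hp)]

theorem Mnum_one (n : ℕ) : Mnum 1 1 n = 1 := by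
  unfold Mnum
  rw [Nat.card_eq_one_iff_unique]
  refine ⟨⟨?_⟩, ⟨⟨rcomb n, numLeaves_rcomb n, ?_⟩⟩⟩
  · rintro ⟨t, ht, h⟩ ⟨t', ht', h'⟩
    apply Subtype.ext
    show t = t'
    rw [eq_rcomb t n ht fun p u hp hu => h (p.count Dir.L) (Nat.zero_le _) ⟨p, u, hp, rfl, hu⟩,
      eq_rcomb t' n ht' fun p u hp hu => h' (p.count Dir.L) (Nat.zero_le _) ⟨p, u, hp, rfl, hu⟩]
  · rintro δ - ⟨p, u, hp, -, hu⟩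
    exact rcomb_avoids n p u hp hu

theorem modListEq_one (l : List ℕ) : ∀ l', l.length = l'.length → ModListEq 1 l l' := by
  unfold ModListEq
  induction l with
  | nil => intro l' h; cases l' <;> simp at h ⊢
  | cons a l ih =>
    intro l' h
    cases l' with
    | nil => simp at h
    | cons b l' => exact List.Forall₂.cons (by omega) (ih _ (by simpa using h))

theorem Cdk_one_one (n : ℕ) : Cdk 1 1 n = 1 := by
  unfold Cdk
  rw [Nat.card_eq_one_iff_unique]
  refine ⟨⟨?_⟩, ⟨Quot.mk _ ⟨rcomb n, numLeaves_rcomb n⟩⟩⟩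
  rintro ⟨t⟩ ⟨t'⟩
  have hl : t.1.ld.length = t'.1.ld.length := by rw [length_ld, length_ld, t.2, t'.2]
  exact Quot.sound ⟨modListEq_one _ _ hl, (vseq_ld _).depthEq_one _ (vseq_ld _) hl⟩

theorem Cknum_eq (d n : ℕ) : Cknum 2 d n = Cknum 1 (d + 1) n := by
  cases d with
  | zero => exact (Mnum_one n).trans (Cdk_one_one n).symm
  | succ d => exact main_pos d n

/-- for `d ≥ 0`, `C_2^d(x) = C_1^{d+1}(x)`; equivalently
`C^d_{2,n} = C^{d+1}_{1,n}` for all `n` (with the convention `C_k^0(x) := M^1_{k-1}(x)`). -/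
theorem stmt17 (d : ℕ) :
    CkdX 2 d = CkdX 1 (d + 1) ∧ ∀ n : ℕ, Cknum 2 d n = Cknum 1 (d + 1) n := by
  refine ⟨?_, Cknum_eq d⟩
  unfold CkdX
  congr 1
  funext m
  cases m with
  | zero => rfl
  | succ n => simp only [Cknum_eq d n]
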